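/- For every integer m > 1, the real polynomial Bohnenblust–Hille constant satisfies D_{ℝ,m} > (2·3^{1/4}/√5)^m > (1.17)^m. -/

import Mathlib

open MvPolynomial Filter

/-- The sup norm of a real polynomial in `n` variables over the cube `[-1,1]^n`. -/
noncomputable def supNorm {n : ℕ} (P : MvPolynomial (Fin n) ℝ) : ℝ :=
  sSup {y : ℝ | ∃ x : Fin n → ℝ, (∀ i, |x i| ≤ 1) ∧ y = |eval x P|}

/-- The `ℓ_p` norm of the coefficients of a real polynomial. -/
noncomputable def lpNorm {n : ℕ} (p : ℝ) (P : MvPolynomial (Fin n) ℝ) : ℝ :=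
  (∑ α ∈ P.support, |coeff α P| ^ p) ^ (1 / p)

/-- The real polynomial Bohnenblust–Hille constant `D_{ℝ,m}`. -/
noncomputable def BHconst (m : ℕ) : ℝ :=
  sInf {D : ℝ | 0 < D ∧ ∀ (n : ℕ) (P : MvPolynomial (Fin n) ℝ),
    P.IsHomogeneous m → lpNorm (2 * m / (m + 1)) P ≤ D * supNorm P}

/-- The real polynomial Bohnenblust–Hille constant `D_{ℝ,m}(n)` in a fixed number `n`
of variables. -/
noncomputable def BHconstN (m n : ℕ) : ℝ :=
  sInf {D : ℝ | 0 < D ∧ ∀ P : MvPolynomial (Fin n) ℝ,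
    P.IsHomogeneous m → lpNorm (2 * m / (m + 1)) P ≤ D * supNorm P}

/-!
If `P = ∑ i, a i x_{i 1} ⋯ x_{i m}`, polarization bounds the multilinear form with coefficients
`∑ σ, a (i ∘ σ)` by `m ^ m ‖P‖` on the cube. Fixing one coordinate of the multi-index and applying
Khinchine's inequality in the other `m - 1` bounds the mixed `(ℓ₁, ℓ₂)` norms of these coefficients,
and Blei's inequality turns the mixed bounds into an `ℓ_{2m/(m+1)}` bound. Hence the set of
admissible constants is nonempty and its infimum `BHconst m` is itself admissible.

For the lower bound, `q = x² - y² + xy` has three coefficients of modulus `1` and sup norm at most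
`5/4`. A product of `k` copies of `q` in disjoint variables has `3 ^ k` coefficients of modulus `1`
and sup norm at most `(5/4) ^ k`; multiplying by one further variable reaches the odd degrees.
For `m = 2 k + r` this gives `BHconst m ≥ 3 ^ (k (m + 1) / (2 m)) (4/5) ^ k`. Since
`growthRate ^ 2 = (4/5) √3`, the right-hand side is `growthRate ^ (2 k) * 3 ^ (k / (2 m))`, and when
`r = 1` the last factor is at least `3 ^ (1/6) > growthRate`.
-/

open scoped BigOperators

section Khinchine

variable {I J Ω Ω' ι : Type*} [Fintype I] [Fintype J] [Fintype Ω] [Fintype Ω'] [Fintype ι]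

/-- The `L¹`–`L²` (Khinchine) inequality with constant `C` for the linear span of the functions
`φ i` on the finite set `Ω` with its uniform probability measure. -/
def KhinchineInequality (φ : I → Ω → ℝ) (C : ℝ) : Prop :=
  ∀ a : I → ℝ, √(∑ i, a i ^ 2) ≤ C * 𝔼 ω, |∑ i, a i * φ i ω|

lemma sqrt_expect_sq_le_of_expect_pow_four_le {f : Ω → ℝ} {K : ℝ} (hK : 0 < K)
    (hf : 𝔼 ω, f ω ^ 4 ≤ K * (𝔼 ω, f ω ^ 2) ^ 2) :
    √(𝔼 ω, f ω ^ 2) ≤ √K * 𝔼 ω, |f ω| := by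
  have pointwise (s : ℝ) (hs : 0 ≤ s) (ω : Ω) :
      3 * s ^ 2 * f ω ^ 2 ≤ f ω ^ 4 + 2 * s ^ 3 * |f ω| := by
    have h : 0 ≤ |f ω| * (|f ω| - s) ^ 2 * (|f ω| + 2 * s) := by positivity
    rw [← sq_abs (f ω), ← Even.pow_abs (by decide : Even 4)]
    linarith
  have averaged (s : ℝ) (hs : 0 ≤ s) :
      3 * s ^ 2 * 𝔼 ω, f ω ^ 2 ≤ 𝔼 ω, f ω ^ 4 + 2 * s ^ 3 * 𝔼 ω, |f ω| := by
    simpa only [Finset.expect_add_distrib, ← Finset.mul_expect] using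
      Finset.expect_le_expect fun ω (_ : ω ∈ Finset.univ) ↦ pointwise s hs ω
  set q := √(𝔼 ω, f ω ^ 2)
  have hq : q ^ 2 = 𝔼 ω, f ω ^ 2 :=
    Real.sq_sqrt (Finset.expect_nonneg fun _ _ ↦ sq_nonneg _)
  have hKsq : √K ^ 2 = K := Real.sq_sqrt hK.le
  obtain hq0 | hq0 : 0 = q ∨ 0 < q := (Real.sqrt_nonneg _).eq_or_lt
  · rw [← hq0]
    exact mul_nonneg (Real.sqrt_nonneg _) (Finset.expect_nonneg fun _ _ ↦ abs_nonneg _)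
  -- The choice of `s` for which the fourth moment costs a third of the left-hand side.
  have optimized := averaged (√K * q) (by positivity)
  rw [← hq] at hf optimized
  refine le_of_mul_le_mul_left (a := 2 * K * q ^ 3) ?_ (by positivity)
  linear_combination optimized + hf -
    (3 * q ^ 4 - 2 * √K * q ^ 3 * 𝔼 ω, |f ω|) * hKsq

lemma intUnits_cast_sq (u : ℤˣ) : ((u : ℤ) : ℝ) ^ 2 = 1 := by
  obtain rfl | rfl := Int.units_eq_one_or u <;> simp

lemma abs_intUnits_cast (u : ℤˣ) : |((u : ℤ) : ℝ)| = 1 := by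
  obtain rfl | rfl := Int.units_eq_one_or u <;> simp

lemma expect_mul_left {G M : Type*} [Group G] [Fintype G] [AddCommMonoid M] [Module ℚ≥0 M]
    (g : G) (F : G → M) : 𝔼 ε, F (g * ε) = 𝔼 ε, F ε :=
  Fintype.expect_equiv (Equiv.mulLeft g) _ _ fun _ ↦ rfl

lemma expect_signs_sum_insert [DecidableEq ι] {k : ι} {s : Finset ι} (hk : k ∉ s) (a : ι → ℝ)
    (g : ℝ → ℝ) :
    𝔼 ε : ι → ℤˣ, g (∑ i ∈ insert k s, a i * ε i) =
      𝔼 ε : ι → ℤˣ, (g (∑ i ∈ s, a i * ε i + a k) + g (∑ i ∈ s, a i * ε i - a k)) / 2 := by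
  set F : (ι → ℤˣ) → ℝ := fun ε ↦ g (∑ i ∈ insert k s, a i * ε i) with hF
  have flip_avg : 𝔼 ε, F ε = 𝔼 ε, (F (Pi.mulSingle k (-1) * ε) + F ε) / 2 := by
    rw [← Finset.expect_div, Finset.expect_add_distrib, expect_mul_left, add_self_div_two]
  rw [flip_avg]
  refine Finset.expect_congr rfl fun ε _ ↦ ?_
  have sum_flip : ∑ i ∈ s, a i * ((Pi.mulSingle k (-1) * ε : ι → ℤˣ) i : ℤ) =
      ∑ i ∈ s, a i * (ε i : ℤ) :=
    Finset.sum_congr rfl fun i hi ↦ by simp [ne_of_mem_of_not_mem hi hk]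
  simp only [hF, Finset.sum_insert hk, sum_flip]
  simp only [Pi.mul_apply, Pi.mulSingle_eq_same]
  obtain h | h := Int.units_eq_one_or (ε k) <;> simp [h] <;> ring_nf

lemma expect_signs_sum_sq [DecidableEq ι] (a : ι → ℝ) (s : Finset ι) :
    𝔼 ε : ι → ℤˣ, (∑ i ∈ s, a i * ε i) ^ 2 = ∑ i ∈ s, a i ^ 2 := by
  induction s using Finset.induction with
  | empty => simp
  | insert k s hk ih =>
    have parallelogram (x : ℝ) : ((x + a k) ^ 2 + (x - a k) ^ 2) / 2 = a k ^ 2 + x ^ 2 := by ring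
    rw [expect_signs_sum_insert hk a (· ^ 2), Finset.sum_insert hk]
    simp only [parallelogram, Finset.expect_add_distrib, Fintype.expect_const, ih]

lemma expect_signs_sum_pow_four_le [DecidableEq ι] (a : ι → ℝ) (s : Finset ι) :
    𝔼 ε : ι → ℤˣ, (∑ i ∈ s, a i * ε i) ^ 4 ≤ 3 * (∑ i ∈ s, a i ^ 2) ^ 2 := by
  induction s using Finset.induction with
  | empty => simp
  | insert k s hk ih =>
    have even_part (x : ℝ) : ((x + a k) ^ 4 + (x - a k) ^ 4) / 2 =
        a k ^ 4 + 6 * a k ^ 2 * x ^ 2 + x ^ 4 := by ring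
    rw [expect_signs_sum_insert hk a (· ^ 4), Finset.sum_insert hk]
    simp only [even_part, Finset.expect_add_distrib, Fintype.expect_const, ← Finset.mul_expect,
      expect_signs_sum_sq]
    nlinarith [sq_nonneg (a k ^ 2)]

lemma khinchineInequality_signs [DecidableEq ι] :
    KhinchineInequality (fun (i : ι) (ε : ι → ℤˣ) ↦ ((ε i : ℤ) : ℝ)) √3 := by
  intro a
  have second := expect_signs_sum_sq a Finset.univ
  have fourth := expect_signs_sum_pow_four_le a Finset.univ
  rw [← second] at fourth ⊢
  exact sqrt_expect_sq_le_of_expect_pow_four_le three_pos fourth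

lemma sqrt_sum_sq_expect_le (g : I → Ω → ℝ) :
    √(∑ i, (𝔼 ω, g i ω) ^ 2) ≤ 𝔼 ω, √(∑ i, g i ω ^ 2) := by
  have minkowski := Finset.le_expect_of_subadditive (s := Finset.univ)
    (m := fun v : I → ℝ ↦ ‖WithLp.toLp 2 v‖) (f := fun ω i ↦ g i ω) (by simp)
    (fun v w ↦ norm_add_le (WithLp.toLp 2 v) (WithLp.toLp 2 w)) fun q v ↦ by
      simp [← NNRat.cast_smul_eq_nnqsmul ℝ, norm_smul]
  simpa [EuclideanSpace.norm_eq] using minkowski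

lemma KhinchineInequality.tensor {φ : I → Ω → ℝ} {ψ : J → Ω' → ℝ} {C C' : ℝ}
    (hφ : KhinchineInequality φ C) (hψ : KhinchineInequality ψ C') (hC' : 0 ≤ C') :
    KhinchineInequality (fun (p : I × J) (q : Ω × Ω') ↦ φ p.1 q.1 * ψ p.2 q.2) (C' * C) := by
  intro a
  let A (i : I) (ω' : Ω') : ℝ := ∑ j, a (i, j) * ψ j ω'
  calc √(∑ p, a p ^ 2)
      = √(∑ i, √(∑ j, a (i, j) ^ 2) ^ 2) := by
        simp only [Fintype.sum_prod_type, Real.sq_sqrt (Finset.sum_nonneg fun _ _ ↦ sq_nonneg _)]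
    _ ≤ √(∑ i, (C' * 𝔼 ω', |A i ω'|) ^ 2) := by
        gcongr with i
        exact hψ _
    _ = C' * √(∑ i, (𝔼 ω', |A i ω'|) ^ 2) := by
        simp only [mul_pow, ← Finset.mul_sum]
        rw [Real.sqrt_mul (sq_nonneg _), Real.sqrt_sq hC']
    _ ≤ C' * 𝔼 ω', √(∑ i, A i ω' ^ 2) := by
        gcongr
        simpa only [sq_abs] using sqrt_sum_sq_expect_le fun i ω' ↦ |A i ω'|
    _ ≤ C' * 𝔼 ω', C * 𝔼 ω, |∑ i, A i ω' * φ i ω| := by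
        gcongr with ω'
        exact hφ _
    _ = C' * C * 𝔼 q : Ω × Ω', |∑ p : I × J, a p * (φ p.1 q.1 * ψ p.2 q.2)| := by
        rw [← Finset.mul_expect, mul_assoc, Finset.expect_comm, ← Finset.univ_product_univ,
          Finset.expect_product]
        simp only [A, Fintype.sum_prod_type, Finset.sum_mul, mul_assoc, mul_comm (φ _ _)]

lemma KhinchineInequality.of_equiv {φ : I → Ω → ℝ} {ψ : J → Ω' → ℝ} {C : ℝ}
    (hφ : KhinchineInequality φ C) (e : I ≃ J) (g : Ω ≃ Ω') (h : ∀ i ω, ψ (e i) (g ω) = φ i ω) :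
    KhinchineInequality ψ C := by
  intro a
  have sum_comp (ω : Ω) : ∑ j, a j * ψ j (g ω) = ∑ i, a (e i) * φ i ω := by
    rw [← e.sum_comp]
    simp only [h]
  rw [← e.sum_comp (a · ^ 2), ← Fintype.expect_equiv g _ _ fun _ ↦ rfl]
  simpa only [sum_comp] using hφ fun i ↦ a (e i)

lemma khinchineInequality_chaos [DecidableEq ι] (d : ℕ) :
    KhinchineInequality
      (fun (i : Fin d → ι) (ε : Fin d → ι → ℤˣ) ↦ ∏ k, ((ε k (i k) : ℤ) : ℝ)) (√3 ^ d) := by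
  induction d with
  | zero => simp [KhinchineInequality, Real.sqrt_sq_eq_abs]
  | succ d ih =>
    refine (khinchineInequality_signs.tensor ih (by positivity)).of_equiv
      (Fin.consEquiv fun _ ↦ ι) (Fin.consEquiv fun _ ↦ ι → ℤˣ) fun i ε ↦ ?_
    simp [Fin.prod_univ_succ, Fin.consEquiv]

end Khinchine

section MultilinearBohnenblustHille

/-- The Bohnenblust–Hille exponent `2m / (m + 1)` in degree `m`. -/
noncomputable def bhExponent (m : ℕ) : ℝ := 2 * m / (m + 1)

lemma bhExponent_pos {m : ℕ} (hm : m ≠ 0) : 0 < bhExponent m := by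
  rw [bhExponent]
  positivity

lemma one_div_bhExponent (m : ℕ) : 1 / bhExponent m = (m + 1) / (2 * m) := one_div_div _ _

variable {κ ι : Type*} [Fintype κ] [Fintype ι]

/- AM-GM for the `m + 1` numbers `c ^ 2 / v k` and `∏ k, v k`, whose product is `c ^ (2 * m)`. -/
lemma abs_rpow_le_sum_div_add_prod (c : ℝ) {v : κ → ℝ} (hv : ∀ k, 0 < v k) :
    |c| ^ bhExponent (Fintype.card κ) ≤
      (1 / (Fintype.card κ + 1) : ℝ) * (∑ k, c ^ 2 / v k + ∏ k, v k) := by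
  have hprod : 0 < ∏ k, v k := Finset.prod_pos fun k _ ↦ hv k
  let z : Option κ → ℝ := fun o ↦ o.elim (∏ k, v k) fun k ↦ c ^ 2 / v k
  have hz (o : Option κ) : 0 ≤ z o := by
    cases o with
    | none => exact hprod.le
    | some k => exact div_nonneg (sq_nonneg c) (hv k).le
  have prod_z : ∏ o, z o = |c| ^ (2 * Fintype.card κ) := by
    rw [Fintype.prod_option]
    simp only [z, Option.elim, Finset.prod_div_distrib, mul_div_cancel₀ _ hprod.ne',
      Finset.prod_const, Finset.card_univ, pow_mul, sq_abs]
  calc |c| ^ bhExponent (Fintype.card κ)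
      = ∏ o, z o ^ (1 / (Fintype.card κ + 1) : ℝ) := by
        rw [Real.finsetProd_rpow _ _ fun o _ ↦ hz o, prod_z, ← Real.rpow_natCast,
          ← Real.rpow_mul (abs_nonneg c), bhExponent]
        push_cast
        ring_nf
    _ ≤ ∑ o, (1 / (Fintype.card κ + 1) : ℝ) * z o :=
        Real.geom_mean_le_arith_mean_weighted _ _ _ (fun _ _ ↦ by positivity)
          (by simp; field_simp) fun o _ ↦ hz o
    _ = (1 / (Fintype.card κ + 1) : ℝ) * (∑ k, c ^ 2 / v k + ∏ k, v k) := by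
        rw [← Finset.mul_sum, Fintype.sum_option, add_comm (z none)]
        rfl

variable [DecidableEq κ]

lemma sum_abs_rpow_le_one_of_mixed_norm_le_one [Nonempty κ] [DecidableEq ι] (b : (κ → ι) → ℝ)
    (w : κ → ι → ℝ) (hw : ∀ k j, 0 ≤ w k j)
    (hbw : ∀ k j, ∑ i with i k = j, b i ^ 2 = w k j ^ 2) (hw1 : ∀ k, ∑ j, w k j ≤ 1) :
    ∑ i, |b i| ^ bhExponent (Fintype.card κ) ≤ 1 := by
  have pointwise (i : κ → ι) : |b i| ^ bhExponent (Fintype.card κ) ≤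
      (1 / (Fintype.card κ + 1) : ℝ) * (∑ k, b i ^ 2 / w k (i k) + ∏ k, w k (i k)) := by
    obtain hb | hb := eq_or_ne (b i) 0
    · have : 0 ≤ ∏ k, w k (i k) := Finset.prod_nonneg fun k _ ↦ hw k _
      rw [hb, abs_zero, Real.zero_rpow (bhExponent_pos Fintype.card_ne_zero).ne']
      simp only [ne_eq, OfNat.ofNat_ne_zero, not_false_eq_true, zero_pow, zero_div,
        Finset.sum_const_zero, zero_add]
      positivity
    · refine abs_rpow_le_sum_div_add_prod _ fun k ↦ ?_
      refine (hw k _).lt_of_ne' fun hwk ↦ (sq_pos_of_ne_zero hb).not_ge ?_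
      calc b i ^ 2 ≤ ∑ i' with i' k = i k, b i' ^ 2 :=
            Finset.single_le_sum (f := (b · ^ 2)) (fun _ _ ↦ sq_nonneg _) (by simp)
        _ = 0 := by rw [hbw, hwk, zero_pow two_ne_zero]
  have sum_div_le (k : κ) : ∑ i, b i ^ 2 / w k (i k) ≤ 1 := by
    calc ∑ i, b i ^ 2 / w k (i k)
        = ∑ j, ∑ i with i k = j, b i ^ 2 / w k (i k) :=
          (Finset.sum_fiberwise _ (fun i : κ → ι ↦ i k) _).symm
      _ = ∑ j, (∑ i with i k = j, b i ^ 2) / w k j := by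
          refine Finset.sum_congr rfl fun j _ ↦ ?_
          rw [Finset.sum_div]
          exact Finset.sum_congr rfl fun i hi ↦ by rw [(Finset.mem_filter.1 hi).2]
      _ = ∑ j, w k j := by simp only [hbw, sq (w _ _), mul_self_div_self]
      _ ≤ 1 := hw1 k
  have sum_prod_le : ∑ i : κ → ι, ∏ k, w k (i k) ≤ 1 := by
    rw [← Fintype.prod_sum]
    exact Finset.prod_le_one (fun k _ ↦ Finset.sum_nonneg fun j _ ↦ hw k j) fun k _ ↦ hw1 k
  calc ∑ i, |b i| ^ bhExponent (Fintype.card κ)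
      ≤ ∑ i, (1 / (Fintype.card κ + 1) : ℝ) * (∑ k, b i ^ 2 / w k (i k) + ∏ k, w k (i k)) :=
        Finset.sum_le_sum fun i _ ↦ pointwise i
    _ = (1 / (Fintype.card κ + 1) : ℝ) *
          (∑ k, ∑ i, b i ^ 2 / w k (i k) + ∑ i : κ → ι, ∏ k, w k (i k)) := by
        rw [← Finset.mul_sum, Finset.sum_add_distrib, Finset.sum_comm]
    _ ≤ (1 / (Fintype.card κ + 1) : ℝ) * (∑ _ : κ, 1 + 1) := by
        gcongr with k
        exact sum_div_le k
    _ = 1 := by simp; field_simp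

lemma blei_inequality [Nonempty κ] [DecidableEq ι] (b : (κ → ι) → ℝ) {W : ℝ}
    (hW : ∀ k, ∑ j, √(∑ i with i k = j, b i ^ 2) ≤ W) :
    (∑ i, |b i| ^ bhExponent (Fintype.card κ)) ^
      (1 / bhExponent (Fintype.card κ)) ≤ W := by
  have hp : 0 < bhExponent (Fintype.card κ) := bhExponent_pos Fintype.card_ne_zero
  have hW0 : 0 ≤ W :=
    (Finset.sum_nonneg fun _ _ ↦ Real.sqrt_nonneg _).trans (hW (Classical.arbitrary κ))
  -- `W` may vanish, so the coefficients are normalized by an arbitrary `V > W`.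
  refine le_of_forall_gt_imp_ge_of_dense fun V hV ↦ ?_
  have hV0 : 0 < V := hW0.trans_lt hV
  have normalized := sum_abs_rpow_le_one_of_mixed_norm_le_one (fun i ↦ b i / V)
    (fun k j ↦ √(∑ i with i k = j, b i ^ 2) / V) (fun k j ↦ by positivity)
    (fun k j ↦ by
      simp only [div_pow, ← Finset.sum_div]
      rw [Real.sq_sqrt (Finset.sum_nonneg fun _ _ ↦ sq_nonneg _)])
    (fun k ↦ by
      rw [← Finset.sum_div, div_le_one hV0]
      exact (hW k).trans hV.le)
  simp only [abs_div, abs_of_pos hV0, Real.div_rpow (abs_nonneg _) hV0.le] at normalized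
  rw [← Finset.sum_div, div_le_one (by positivity)] at normalized
  rw [one_div]
  exact (Real.rpow_inv_le_iff_of_pos (Finset.sum_nonneg fun _ _ ↦ by positivity) hV0.le hp).2
    normalized

lemma exists_sign_mul_eq_abs (x : ℝ) : ∃ u : ℤˣ, (u : ℤ) * x = |x| := by
  obtain h | h := abs_choice x
  · exact ⟨1, by simp [h]⟩
  · exact ⟨-1, by simp [h]⟩

lemma sum_insertNth {M : Type*} [AddCommMonoid M] {d : ℕ} (k : Fin (d + 1))
    (F : (Fin (d + 1) → ι) → M) :
    ∑ i, F i = ∑ j, ∑ i : Fin d → ι, F (k.insertNth j i) := by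
  rw [← (Fin.insertNthEquiv (fun _ ↦ ι) k).sum_comp, Fintype.sum_prod_type]
  rfl

lemma sum_sqrt_sum_sq_le_of_forall_signs [DecidableEq ι] {d : ℕ} (b : (Fin (d + 1) → ι) → ℝ)
    {M : ℝ}
    (hM : ∀ ε : Fin (d + 1) → ι → ℤˣ, |∑ i, b i * ∏ k, ((ε k (i k) : ℤ) : ℝ)| ≤ M)
    (k : Fin (d + 1)) :
    ∑ j, √(∑ i with i k = j, b i ^ 2) ≤ √3 ^ d * M := by
  let R (ε : Fin d → ι → ℤˣ) (j : ι) : ℝ :=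
    ∑ i, b (k.insertNth j i) * ∏ l, ((ε l (i l) : ℤ) : ℝ)
  have slice (j : ι) : ∑ i with i k = j, b i ^ 2 = ∑ i, b (k.insertNth j i) ^ 2 := by
    rw [Finset.sum_filter, sum_insertNth k, Finset.sum_comm]
    simp
  have sum_abs_slice_le (ε : Fin d → ι → ℤˣ) : ∑ j, |R ε j| ≤ M := by
    choose u hu using fun j ↦ exists_sign_mul_eq_abs (R ε j)
    refine le_trans (le_of_eq ?_) ((le_abs_self _).trans (hM (k.insertNth u ε)))
    rw [sum_insertNth k]
    refine Finset.sum_congr rfl fun j _ ↦ ?_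
    rw [← hu, Finset.mul_sum]
    refine Finset.sum_congr rfl fun i _ ↦ ?_
    simp only [Fin.prod_univ_succAbove _ k, Fin.insertNth_apply_same,
      Fin.insertNth_apply_succAbove]
    ring
  calc ∑ j, √(∑ i with i k = j, b i ^ 2)
      ≤ ∑ j, √3 ^ d * 𝔼 ε, |R ε j| := by
        gcongr with j
        rw [slice]
        exact khinchineInequality_chaos d _
    _ = √3 ^ d * 𝔼 ε, ∑ j, |R ε j| := by rw [← Finset.mul_sum, Finset.expect_sum_comm]
    _ ≤ √3 ^ d * M := by
        gcongr
        exact Finset.expect_le Finset.univ_nonempty fun ε _ ↦ sum_abs_slice_le ε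

lemma multilinear_bohnenblustHille {d : ℕ} (b : (Fin (d + 1) → ι) → ℝ) {M : ℝ}
    (hM : ∀ ε : Fin (d + 1) → ι → ℤˣ, |∑ i, b i * ∏ k, ((ε k (i k) : ℤ) : ℝ)| ≤ M) :
    (∑ i, |b i| ^ bhExponent (d + 1)) ^
      (1 / bhExponent (d + 1)) ≤ √3 ^ d * M := by
  classical
  simpa only [Fintype.card_fin] using blei_inequality b (sum_sqrt_sum_sq_le_of_forall_signs b hM)

end MultilinearBohnenblustHille

section Polarization

variable {κ ι : Type*} [Fintype κ] [DecidableEq κ] [Fintype ι]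

lemma expect_signs_prod_mul_prod_comp (f : κ → κ) [Decidable (Function.Bijective f)] :
    𝔼 ε : κ → ℤˣ, (∏ k, ((ε k : ℤ) : ℝ)) * ∏ l, ((ε (f l) : ℤ) : ℝ) =
      if Function.Bijective f then 1 else 0 := by
  split_ifs with hf
  · have prod_eq_one (ε : κ → ℤˣ) :
        (∏ k, ((ε k : ℤ) : ℝ)) * ∏ l, ((ε (f l) : ℤ) : ℝ) = 1 := by
      rw [hf.prod_comp fun k ↦ ((ε k : ℤ) : ℝ), ← Finset.prod_mul_distrib]
      exact Finset.prod_eq_one fun k _ ↦ by rw [← sq, intUnits_cast_sq]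
    simp only [prod_eq_one, Fintype.expect_const]
  · obtain ⟨k, hk⟩ : ∃ k, ∀ l, f l ≠ k := by
      simpa [Function.Surjective] using mt Finite.surjective_iff_bijective.1 hf
    let F (ε : κ → ℤˣ) : ℝ := (∏ k, ((ε k : ℤ) : ℝ)) * ∏ l, ((ε (f l) : ℤ) : ℝ)
    have flip_neg (ε : κ → ℤˣ) : F (Pi.mulSingle k (-1) * ε) = -F ε := by
      simp only [F, Pi.mul_apply, Units.val_mul, Int.cast_mul, Finset.prod_mul_distrib,
        Pi.mulSingle_eq_of_ne (hk _), one_mul]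
      rw [Fintype.prod_eq_single k fun l hl ↦ by simp [hl]]
      simp
    have := expect_mul_left (Pi.mulSingle k (-1)) F
    simp only [flip_neg, Finset.expect_neg_distrib] at this
    exact self_eq_neg.1 this.symm

lemma permanent_eq_expect_signs (A : Matrix κ κ ℝ) :
    A.permanent = 𝔼 ε : κ → ℤˣ, (∏ k, ((ε k : ℤ) : ℝ)) * ∏ l, ∑ k, ε k * A k l := by
  classical
  symm
  calc 𝔼 ε : κ → ℤˣ, (∏ k, ((ε k : ℤ) : ℝ)) * ∏ l, ∑ k, ε k * A k l
      = ∑ f : κ → κ, (𝔼 ε : κ → ℤˣ, (∏ k, ((ε k : ℤ) : ℝ)) * ∏ l, ((ε (f l) : ℤ) : ℝ)) *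
          ∏ l, A (f l) l := by
        simp only [Fintype.prod_sum, Finset.mul_sum, Finset.prod_mul_distrib, ← mul_assoc,
          Finset.expect_sum_comm, Finset.expect_mul]
    _ = ∑ f : κ → κ with Function.Bijective f, ∏ l, A (f l) l := by
        simp only [expect_signs_prod_mul_prod_comp, ite_mul, one_mul, zero_mul, Finset.sum_filter]
    _ = A.permanent := by
        refine (Finset.sum_of_injOn (fun σ : Equiv.Perm κ ↦ ⇑σ) Equiv.coe_fn_injective.injOn
          (fun σ _ ↦ by simp) (fun f hf hf' ↦ ?_) fun σ _ ↦ rfl).symm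
        exact absurd ⟨Equiv.ofBijective f (by simpa using hf), by simp⟩ hf'

/-- The sum of the entries of a tensor over all permutations of a multi-index, that is, the
symmetrization of `a` without the normalization `1 / m!`. -/
def permSum (a : (κ → ι) → ℝ) (i : κ → ι) : ℝ := ∑ σ : Equiv.Perm κ, a (i ∘ σ)

lemma sum_permSum_mul_prod_eq_expect_signs (a : (κ → ι) → ℝ) (x : κ → ι → ℝ) :
    ∑ i, permSum a i * ∏ k, x k (i k) =
      𝔼 ε : κ → ℤˣ, (∏ k, ((ε k : ℤ) : ℝ)) * ∑ i, a i * ∏ l, ∑ k, ε k * x k (i l) := by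
  symm
  calc 𝔼 ε : κ → ℤˣ, (∏ k, ((ε k : ℤ) : ℝ)) * ∑ i, a i * ∏ l, ∑ k, ε k * x k (i l)
      = ∑ i, a i * (Matrix.of fun k l ↦ x k (i l)).permanent := by
        simp only [permanent_eq_expect_signs, Finset.mul_sum, Finset.expect_sum_comm,
          Finset.mul_expect, Matrix.of_apply, mul_left_comm (a _)]
    _ = ∑ σ : Equiv.Perm κ, ∑ i, a i * ∏ l, x (σ l) (i l) := by
        simp only [Matrix.permanent, Matrix.of_apply, Finset.mul_sum]
        exact Finset.sum_comm
    _ = ∑ σ : Equiv.Perm κ, ∑ i : κ → ι, a (i ∘ σ) * ∏ k, x k (i k) := by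
        refine Finset.sum_congr rfl fun σ _ ↦ ?_
        rw [← (σ.symm.arrowCongr (Equiv.refl ι)).sum_comp]
        refine Finset.sum_congr rfl fun i _ ↦ ?_
        rw [← Equiv.prod_comp σ fun k ↦ x k (i k)]
        simp [Equiv.arrowCongr, Function.comp_def]
    _ = ∑ i, permSum a i * ∏ k, x k (i k) := by
        rw [Finset.sum_comm]
        simp only [permSum, Finset.sum_mul]

lemma abs_sum_permSum_mul_prod_le (a : (κ → ι) → ℝ) {M : ℝ}
    (hM : ∀ y : ι → ℝ, (∀ j, |y j| ≤ 1) → |∑ i, a i * ∏ k, y (i k)| ≤ M) {x : κ → ι → ℝ}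
    (hx : ∀ k j, |x k j| ≤ 1) :
    |∑ i, permSum a i * ∏ k, x k (i k)| ≤ Fintype.card κ ^ Fintype.card κ * M := by
  set m := Fintype.card κ
  let y (ε : κ → ℤˣ) (j : ι) : ℝ := (∑ k, ε k * x k j) / m
  have abs_y_le (ε : κ → ℤˣ) (j : ι) : |y ε j| ≤ 1 := by
    rw [abs_div, Nat.abs_cast]
    refine div_le_one_of_le₀ ?_ m.cast_nonneg
    calc |∑ k, ε k * x k j| ≤ ∑ k, |ε k * x k j| := Finset.abs_sum_le_sum_abs _ _
      _ ≤ ∑ _k : κ, 1 := by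
          gcongr with k
          simpa only [abs_mul, abs_intUnits_cast, one_mul] using hx k j
      _ = m := by simp [m]
  have scale (ε : κ → ℤˣ) : ∑ i, a i * ∏ l, ∑ k, ε k * x k (i l) =
      m ^ m * ∑ i, a i * ∏ l, y ε (i l) := by
    have hm : (m : ℝ) ^ m ≠ 0 := by exact_mod_cast (Nat.pow_self_pos (n := m)).ne'
    simp only [y, Finset.prod_div_distrib, Finset.prod_const, Finset.card_univ, Finset.mul_sum]
    refine Finset.sum_congr rfl fun i _ ↦ ?_
    rw [mul_left_comm, mul_div_cancel₀ _ hm]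
  rw [sum_permSum_mul_prod_eq_expect_signs]
  refine (Finset.abs_expect_le _ _).trans (Finset.expect_le Finset.univ_nonempty fun ε _ ↦ ?_)
  rw [abs_mul, Finset.abs_prod, scale, abs_mul, abs_of_nonneg (by positivity)]
  simp only [abs_intUnits_cast, Finset.prod_const_one, one_mul]
  gcongr
  exact hM _ (abs_y_le ε)

end Polarization

section CoefficientTensor

variable {ι : Type*}

lemma exists_sum_single_eq_of_degree_eq {m : ℕ} {α : ι →₀ ℕ} (hα : α.degree = m) :
    ∃ j : Fin m → ι, ∑ k, Finsupp.single (j k) 1 = α := by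
  induction m generalizing α with
  | zero => exact ⟨Fin.elim0, by simp [(Finsupp.degree_eq_zero_iff α).1 hα]⟩
  | succ m ih =>
    obtain ⟨x, hx⟩ : ∃ x, α x ≠ 0 := Finsupp.ne_iff.1 fun h : α = 0 ↦ by simp [h] at hα
    obtain ⟨β, rfl⟩ : ∃ β, α = Finsupp.single x 1 + β :=
      exists_add_of_le (Finsupp.single_le_iff.2 (Nat.one_le_iff_ne_zero.2 hx))
    obtain ⟨j, rfl⟩ := ih (α := β) (by rw [map_add, Finsupp.degree_single] at hα; omega)
    exact ⟨Fin.cons x j, by simp [Fin.sum_univ_succ]⟩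

lemma eval_monomial_sum_single {m : ℕ} (j : Fin m → ι) (c : ℝ) (x : ι → ℝ) :
    eval x (monomial (∑ k, Finsupp.single (j k) 1) c) = c * ∏ k, x (j k) := by
  simp [monomial_sum_index, eval_monomial]

lemma abs_le_abs_permSum_extend {A κ : Type*} [Fintype κ] [DecidableEq κ] {J : A → κ → ι}
    (hJ : ∀ α β, ∀ σ : Equiv.Perm κ, J α ∘ σ = J β → α = β) (c : A → ℝ) (α : A) :
    |c α| ≤ |permSum (Function.extend J c 0) (J α)| := by
  classical
  have J_inj : Function.Injective J := fun α β h ↦ hJ α β 1 h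
  have extend_perm (σ : Equiv.Perm κ) :
      Function.extend J c 0 (J α ∘ σ) = if J α ∘ σ = J α then c α else 0 := by
    split_ifs with h
    · rw [h, J_inj.extend_apply]
    · refine Function.extend_apply' _ _ _ ?_
      rintro ⟨β, hβ⟩
      obtain rfl := hJ α β σ hβ.symm
      exact h hβ.symm
  simp only [permSum, extend_perm, ← Finset.sum_filter, Finset.sum_const, nsmul_eq_mul, abs_mul,
    Nat.abs_cast]
  refine le_mul_of_one_le_left (abs_nonneg _) ?_
  exact_mod_cast Finset.card_pos.2 ⟨(1 : Equiv.Perm κ), by simp⟩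

lemma exists_tensor_of_isHomogeneous [Fintype ι] {P : MvPolynomial ι ℝ} {m : ℕ}
    (hP : P.IsHomogeneous m) :
    ∃ a : (Fin m → ι) → ℝ, (∀ x, eval x P = ∑ i, a i * ∏ k, x (i k)) ∧
      ∀ p : ℝ, 0 ≤ p → ∑ α ∈ P.support, |coeff α P| ^ p ≤ ∑ i, |permSum a i| ^ p := by
  have degree_eq (α : P.support) : (α : ι →₀ ℕ).degree = m := by
    rw [Finsupp.degree_eq_weight_one]
    exact hP (mem_support_iff.1 α.2)
  -- `J α` lists the variables of the monomial `x ^ α` with multiplicity, in some order.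
  choose J hJ using fun α ↦ exists_sum_single_eq_of_degree_eq (degree_eq α)
  have eq_of_perm (α β : P.support) (σ : Equiv.Perm (Fin m)) (h : J α ∘ σ = J β) : α = β := by
    refine Subtype.ext ?_
    rw [← hJ α, ← hJ β, ← h]
    exact (Equiv.sum_comp σ fun k ↦ Finsupp.single (J α k) 1).symm
  have J_inj : Function.Injective J := fun α β h ↦ eq_of_perm α β 1 h
  refine ⟨Function.extend J (fun α ↦ coeff α P) 0, fun x ↦ ?_, fun p hp ↦ ?_⟩
  · conv_lhs => rw [P.as_sum, map_sum, ← Finset.sum_coe_sort]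
    refine Fintype.sum_of_injective J J_inj _ _ (fun i hi ↦ ?_) fun α ↦ ?_
    · rw [Function.extend_apply' _ _ _ hi, Pi.zero_apply, zero_mul]
    · conv_lhs => rw [← hJ α]
      rw [eval_monomial_sum_single, hJ, J_inj.extend_apply]
  · calc ∑ α ∈ P.support, |coeff α P| ^ p
        = ∑ α : P.support, |coeff α P| ^ p := (Finset.sum_coe_sort _ _).symm
      _ ≤ ∑ α, |permSum (Function.extend J (fun α ↦ coeff α P) 0) (J α)| ^ p :=
          Finset.sum_le_sum fun α _ ↦ Real.rpow_le_rpow (abs_nonneg _)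
            (abs_le_abs_permSum_extend eq_of_perm (fun α ↦ coeff α P) α) hp
      _ = ∑ i ∈ Finset.univ.map ⟨J, J_inj⟩,
            |permSum (Function.extend J (fun α ↦ coeff α P) 0) i| ^ p := by
          rw [Finset.sum_map]
          rfl
      _ ≤ ∑ i, |permSum (Function.extend J (fun α ↦ coeff α P) 0) i| ^ p :=
          Finset.sum_le_univ_sum_of_nonneg fun _ ↦ Real.rpow_nonneg (abs_nonneg _) _

end CoefficientTensor

section SupNorm

variable {n : ℕ} {P : MvPolynomial (Fin n) ℝ}

lemma abs_eval_le_supNorm {x : Fin n → ℝ} (hx : ∀ i, |x i| ≤ 1) : |eval x P| ≤ supNorm P := by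
  refine le_csSup ?_ ⟨x, hx, rfl⟩
  have cube_compact : IsCompact (Set.univ.pi fun _ : Fin n ↦ Set.Icc (-1 : ℝ) 1) :=
    isCompact_univ_pi fun _ ↦ isCompact_Icc
  refine (cube_compact.image (MvPolynomial.continuous_eval P).abs).bddAbove.mono ?_
  rintro y ⟨x, hx, rfl⟩
  exact ⟨x, fun i _ ↦ abs_le.1 (hx i), rfl⟩

lemma supNorm_le {M : ℝ} (hM : ∀ x : Fin n → ℝ, (∀ i, |x i| ≤ 1) → |eval x P| ≤ M) :
    supNorm P ≤ M := by
  refine csSup_le ⟨_, 0, by simp, rfl⟩ ?_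
  rintro y ⟨x, hx, rfl⟩
  exact hM x hx

lemma supNorm_nonneg (P : MvPolynomial (Fin n) ℝ) : 0 ≤ supNorm P :=
  (abs_nonneg _).trans (abs_eval_le_supNorm (x := 0) (by simp))

end SupNorm

section PolynomialBohnenblustHille

variable {n : ℕ} {P : MvPolynomial (Fin n) ℝ}

theorem bohnenblustHille_inequality {d : ℕ} (hP : P.IsHomogeneous (d + 1)) :
    lpNorm (bhExponent (d + 1)) P ≤
      √3 ^ d * (d + 1 : ℕ) ^ (d + 1) * supNorm P := by
  have hp : 0 < bhExponent (d + 1) := bhExponent_pos d.succ_ne_zero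
  obtain ⟨a, eval_eq, sum_coeff_le⟩ := exists_tensor_of_isHomogeneous hP
  have permSum_bound (ε : Fin (d + 1) → Fin n → ℤˣ) :
      |∑ i, permSum a i * ∏ k, ((ε k (i k) : ℤ) : ℝ)| ≤ (d + 1 : ℕ) ^ (d + 1) * supNorm P := by
    simpa only [Fintype.card_fin] using
      abs_sum_permSum_mul_prod_le a (M := supNorm P)
        (fun y hy ↦ by simpa only [eval_eq] using abs_eval_le_supNorm (P := P) hy)
        fun k j ↦ (abs_intUnits_cast (ε k j)).le
  calc lpNorm (bhExponent (d + 1)) P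
      ≤ (∑ i, |permSum a i| ^ bhExponent (d + 1)) ^
          (1 / bhExponent (d + 1)) :=
        Real.rpow_le_rpow (Finset.sum_nonneg fun _ _ ↦ by positivity)
          (sum_coeff_le _ hp.le) (one_div_nonneg.2 hp.le)
    _ ≤ √3 ^ d * ((d + 1 : ℕ) ^ (d + 1) * supNorm P) :=
        multilinear_bohnenblustHille _ permSum_bound
    _ = √3 ^ d * (d + 1 : ℕ) ^ (d + 1) * supNorm P := (mul_assoc _ _ _).symm

theorem lpNorm_le_BHconst_mul_supNorm {m : ℕ} (hm : m ≠ 0) (hP : P.IsHomogeneous m) :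
    lpNorm (bhExponent m) P ≤ BHconst m * supNorm P := by
  obtain ⟨d, rfl⟩ := Nat.exists_eq_succ_of_ne_zero hm
  obtain hP0 | hP0 := (supNorm_nonneg P).eq_or_lt
  · simpa only [← hP0, mul_zero] using bohnenblustHille_inequality hP
  rw [← div_le_iff₀ hP0]
  -- `sInf ∅ = 0`, so the lower bound on the infimum needs an admissible constant.
  refine le_csInf ⟨√3 ^ d * (d + 1 : ℕ) ^ (d + 1), by positivity, fun n Q hQ ↦
    bohnenblustHille_inequality hQ⟩ fun D hD ↦ ?_
  rw [div_le_iff₀ hP0]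
  exact hD.2 n P hP

lemma BHconst_nonneg (m : ℕ) : 0 ≤ BHconst m := Real.sInf_nonneg fun _ hD ↦ hD.1.le

end PolynomialBohnenblustHille

section DisjointProducts

variable {m n : ℕ}

lemma lpNorm_sum_monomial {A : Type*} {s : Finset A} {e : A → Fin n →₀ ℕ} (he : Set.InjOn e s)
    {c : A → ℝ} (hc : ∀ i ∈ s, c i ≠ 0) (p : ℝ) :
    lpNorm p (∑ i ∈ s, monomial (e i) (c i)) = (∑ i ∈ s, |c i| ^ p) ^ (1 / p) := by
  classical
  have coeff_e : ∀ i ∈ s, coeff (e i) (∑ j ∈ s, monomial (e j) (c j)) = c i := fun i hi ↦ by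
    rw [coeff_sum, Finset.sum_eq_single_of_mem i hi fun j hj hji ↦ ?_, coeff_monomial, if_pos rfl]
    rw [coeff_monomial, if_neg (he.ne hj hi hji)]
  have support_eq : (∑ i ∈ s, monomial (e i) (c i)).support = s.image e := by
    refine (support_sum.trans ?_).antisymm fun α hα ↦ ?_
    · exact Finset.biUnion_subset.2 fun i hi ↦ support_monomial_subset.trans <|
        Finset.singleton_subset_iff.2 (Finset.mem_image_of_mem e hi)
    · obtain ⟨i, hi, rfl⟩ := Finset.mem_image.1 hα
      rw [mem_support_iff, coeff_e i hi]
      exact hc i hi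
  rw [lpNorm, support_eq, Finset.sum_image he,
    Finset.sum_congr rfl fun i hi ↦ by rw [coeff_e i hi]]

lemma lpNorm_monomial (p : ℝ) (α : Fin n →₀ ℕ) {c : ℝ} (hc : c ≠ 0) :
    lpNorm p (monomial α c) = (|c| ^ p) ^ (1 / p) := by
  simpa using lpNorm_sum_monomial (s := {()}) (e := fun _ ↦ α) (by simp) (c := fun _ ↦ c)
    (by simpa using hc) p

/-- The product `P(x) Q(y)` of two polynomials in disjoint sets of variables. -/
noncomputable def disjointMul (P : MvPolynomial (Fin m) ℝ) (Q : MvPolynomial (Fin n) ℝ) :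
    MvPolynomial (Fin (m + n)) ℝ :=
  rename (Fin.castAdd n) P * rename (Fin.natAdd m) Q

lemma disjointMul_eq_sum (P : MvPolynomial (Fin m) ℝ) (Q : MvPolynomial (Fin n) ℝ) :
    disjointMul P Q = ∑ q ∈ P.support ×ˢ Q.support,
      monomial (q.1.mapDomain (Fin.castAdd n) + q.2.mapDomain (Fin.natAdd m))
        (coeff q.1 P * coeff q.2 Q) := by
  conv_lhs => rw [disjointMul, P.as_sum, Q.as_sum]
  simp only [map_sum, rename_monomial, Finset.sum_mul_sum, monomial_mul, Finset.sum_product]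

lemma mapDomain_castAdd_add_mapDomain_natAdd_injective :
    Function.Injective fun q : (Fin m →₀ ℕ) × (Fin n →₀ ℕ) ↦
      q.1.mapDomain (Fin.castAdd n) + q.2.mapDomain (Fin.natAdd m) := by
  have left (q : (Fin m →₀ ℕ) × (Fin n →₀ ℕ)) (i : Fin m) :
      (q.1.mapDomain (Fin.castAdd n) + q.2.mapDomain (Fin.natAdd m)) (Fin.castAdd n i) = q.1 i := by
    rw [Finsupp.add_apply, Finsupp.mapDomain_apply (Fin.castAdd_injective m n),
      Finsupp.mapDomain_of_notMem_range _ _ (by simp [Fin.ext_iff]; omega), add_zero]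
  have right (q : (Fin m →₀ ℕ) × (Fin n →₀ ℕ)) (j : Fin n) :
      (q.1.mapDomain (Fin.castAdd n) + q.2.mapDomain (Fin.natAdd m)) (Fin.natAdd m j) = q.2 j := by
    rw [Finsupp.add_apply, Finsupp.mapDomain_apply (Fin.natAdd_injective n m),
      Finsupp.mapDomain_of_notMem_range _ _ (by simp [Fin.ext_iff]; omega), zero_add]
  intro q q' h
  ext i
  · rw [← left q, ← left q']
    exact DFunLike.congr_fun h _
  · rw [← right q, ← right q']
    exact DFunLike.congr_fun h _

lemma lpNorm_disjointMul (p : ℝ) (P : MvPolynomial (Fin m) ℝ) (Q : MvPolynomial (Fin n) ℝ) :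
    lpNorm p (disjointMul P Q) = lpNorm p P * lpNorm p Q := by
  rw [disjointMul_eq_sum,
    lpNorm_sum_monomial mapDomain_castAdd_add_mapDomain_natAdd_injective.injOn fun q hq ↦ by
      simpa using hq]
  simp only [abs_mul, Real.mul_rpow (abs_nonneg _) (abs_nonneg _), Finset.sum_product,
    ← Finset.sum_mul_sum]
  exact Real.mul_rpow (Finset.sum_nonneg fun _ _ ↦ by positivity)
    (Finset.sum_nonneg fun _ _ ↦ by positivity)

lemma supNorm_disjointMul_le (P : MvPolynomial (Fin m) ℝ) (Q : MvPolynomial (Fin n) ℝ) :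
    supNorm (disjointMul P Q) ≤ supNorm P * supNorm Q := by
  refine supNorm_le fun x hx ↦ ?_
  rw [disjointMul, eval_mul, eval_rename, eval_rename, abs_mul]
  exact mul_le_mul (abs_eval_le_supNorm fun _ ↦ hx _) (abs_eval_le_supNorm fun _ ↦ hx _)
    (abs_nonneg _) (supNorm_nonneg P)

lemma isHomogeneous_disjointMul {P : MvPolynomial (Fin m) ℝ} {Q : MvPolynomial (Fin n) ℝ}
    {d e : ℕ} (hP : P.IsHomogeneous d) (hQ : Q.IsHomogeneous e) :
    (disjointMul P Q).IsHomogeneous (d + e) :=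
  hP.rename_isHomogeneous.mul hQ.rename_isHomogeneous

/-- The product of `k` copies of `P` in disjoint sets of variables. -/
noncomputable def disjointPow (P : MvPolynomial (Fin n) ℝ) : (k : ℕ) → MvPolynomial (Fin (n * k)) ℝ
  | 0 => 1
  | k + 1 => disjointMul (disjointPow P k) P

lemma lpNorm_disjointPow (p : ℝ) (P : MvPolynomial (Fin n) ℝ) (k : ℕ) :
    lpNorm p (disjointPow P k) = lpNorm p P ^ k := by
  induction k with
  | zero => simpa [disjointPow] using lpNorm_monomial p (0 : Fin (n * 0) →₀ ℕ) one_ne_zero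
  | succ k ih => rw [disjointPow, lpNorm_disjointMul, ih, pow_succ]

lemma supNorm_disjointPow_le (P : MvPolynomial (Fin n) ℝ) (k : ℕ) :
    supNorm (disjointPow P k) ≤ supNorm P ^ k := by
  induction k with
  | zero => exact supNorm_le fun x _ ↦ by simp [disjointPow]
  | succ k ih =>
    rw [pow_succ]
    exact (supNorm_disjointMul_le _ P).trans (mul_le_mul_of_nonneg_right ih (supNorm_nonneg P))

lemma isHomogeneous_disjointPow {P : MvPolynomial (Fin n) ℝ} {d : ℕ} (hP : P.IsHomogeneous d)
    (k : ℕ) : (disjointPow P k).IsHomogeneous (d * k) := by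
  induction k with
  | zero => exact isHomogeneous_one _ _
  | succ k ih => exact isHomogeneous_disjointMul ih hP

end DisjointProducts

section ExtremalPolynomial

/-- The quadratic form `x² - y² + xy`, whose coefficients are large compared with its sup norm
`5/4` on the square. -/
noncomputable def extremalQuadratic : MvPolynomial (Fin 2) ℝ :=
  X 0 ^ 2 - X 1 ^ 2 + X 0 * X 1

lemma isHomogeneous_extremalQuadratic : extremalQuadratic.IsHomogeneous 2 :=
  ((isHomogeneous_X_pow _ _).sub (isHomogeneous_X_pow _ _)).add
    ((isHomogeneous_X _ _).mul (isHomogeneous_X _ _))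

lemma lpNorm_extremalQuadratic (p : ℝ) : lpNorm p extremalQuadratic = 3 ^ (1 / p) := by
  let e : Fin 3 → Fin 2 →₀ ℕ :=
    ![Finsupp.single 0 2, Finsupp.single 1 2, Finsupp.single 0 1 + Finsupp.single 1 1]
  let c : Fin 3 → ℝ := ![1, -1, 1]
  have e_inj : Function.Injective e := by
    refine Function.Injective.of_comp (f := fun α ↦ α 0) ?_
    have : (fun α : Fin 2 →₀ ℕ ↦ α 0) ∘ e = ![2, 0, 1] := by
      ext i
      fin_cases i <;> simp [e]
    rw [this]
    decide
  have eq_sum : extremalQuadratic = ∑ i, monomial (e i) (c i) := by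
    simp only [extremalQuadratic, X_pow_eq_monomial]
    simp [Fin.sum_univ_three, e, c, X, monomial_mul, sub_eq_add_neg]
  have abs_c (i : Fin 3) : |c i| = 1 := by fin_cases i <;> simp [c]
  rw [eq_sum, lpNorm_sum_monomial e_inj.injOn fun i _ ↦ abs_ne_zero.1 (by simp [abs_c])]
  simp [abs_c]

lemma supNorm_extremalQuadratic_le : supNorm extremalQuadratic ≤ 5 / 4 := by
  refine supNorm_le fun x hx ↦ ?_
  have hx0 := (sq_le_one_iff_abs_le_one _).2 (hx 0)
  have hx1 := (sq_le_one_iff_abs_le_one _).2 (hx 1)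
  simp only [extremalQuadratic, map_add, map_sub, map_mul, map_pow, eval_X]
  refine abs_le.2 ⟨?_, ?_⟩
  · linarith [sq_nonneg (x 0 + x 1 / 2)]
  · linarith [sq_nonneg (x 1 - x 0 / 2)]

theorem exists_isHomogeneous_lpNorm_eq_supNorm_le (k r : ℕ) :
    ∃ (n : ℕ) (P : MvPolynomial (Fin n) ℝ), P.IsHomogeneous (2 * k + r) ∧
      (∀ p, lpNorm p P = (3 ^ (1 / p)) ^ k) ∧ supNorm P ≤ (5 / 4) ^ k := by
  refine ⟨_, disjointMul (disjointPow extremalQuadratic k) (X 0 ^ r),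
    isHomogeneous_disjointMul (isHomogeneous_disjointPow isHomogeneous_extremalQuadratic k)
      (isHomogeneous_X_pow (0 : Fin 1) r), fun p ↦ ?_, ?_⟩
  · rw [lpNorm_disjointMul, lpNorm_disjointPow, lpNorm_extremalQuadratic, X_pow_eq_monomial,
      lpNorm_monomial p _ one_ne_zero, abs_one, Real.one_rpow, Real.one_rpow, mul_one]
  · have supNorm_X_pow_le : supNorm (X 0 ^ r : MvPolynomial (Fin 1) ℝ) ≤ 1 :=
      supNorm_le fun x hx ↦ by simpa using pow_le_one₀ (abs_nonneg _) (hx 0)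
    calc supNorm (disjointMul (disjointPow extremalQuadratic k) (X 0 ^ r))
        ≤ supNorm (disjointPow extremalQuadratic k) * supNorm (X 0 ^ r) :=
          supNorm_disjointMul_le _ _
      _ ≤ supNorm extremalQuadratic ^ k * 1 :=
          mul_le_mul (supNorm_disjointPow_le _ k) supNorm_X_pow_le (supNorm_nonneg _)
            (pow_nonneg (supNorm_nonneg _) k)
      _ ≤ (5 / 4) ^ k := by
          rw [mul_one]
          exact pow_le_pow_left₀ (supNorm_nonneg _) supNorm_extremalQuadratic_le k

end ExtremalPolynomial

section GrowthRate

/-- The lower bound `2·3^{1/4}/√5` for the exponential growth rate of `BHconst`. -/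
noncomputable def growthRate : ℝ := 2 * (3 : ℝ) ^ ((1 : ℝ) / 4) / Real.sqrt 5

lemma growthRate_pos : 0 < growthRate := by
  rw [growthRate]
  positivity

lemma growthRate_sq : growthRate ^ 2 = 4 / 5 * √3 := by
  rw [growthRate, div_pow, mul_pow, Real.sq_sqrt (by norm_num),
    ← Real.rpow_mul_natCast zero_le_three, Real.sqrt_eq_rpow]
  norm_num
  ring

lemma growthRate_pow_four : growthRate ^ 4 = 48 / 25 := by
  rw [pow_mul growthRate 2 2, growthRate_sq, mul_pow, Real.sq_sqrt zero_le_three]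
  norm_num

lemma growthRate_lt_rpow_one_sixth : growthRate < (3 : ℝ) ^ ((1 : ℝ) / 6) := by
  refine lt_of_pow_lt_pow_left₀ 12 (by positivity) ?_
  rw [pow_mul growthRate 4 3, growthRate_pow_four, ← Real.rpow_mul_natCast zero_le_three]
  norm_num

lemma lt_growthRate : (1.17 : ℝ) < growthRate := by
  refine lt_of_pow_lt_pow_left₀ 4 growthRate_pos.le ?_
  rw [growthRate_pow_four]
  norm_num

lemma growthRate_pow_mul_five_fourths_pow (k r : ℕ) :
    growthRate ^ (2 * k + r) * (5 / 4) ^ k =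
      growthRate ^ r * √3 ^ k := by
  rw [pow_add, pow_mul, growthRate_sq, mul_right_comm, ← mul_pow, mul_comm]
  ring_nf

lemma growthRate_pow_mul_lt {k r : ℕ} (hk : k ≠ 0) (hr : r ≤ 1) :
    growthRate ^ (2 * k + r) * (5 / 4) ^ k <
      (3 ^ (1 / bhExponent (2 * k + r))) ^ k := by
  have hk1 : (1 : ℝ) ≤ k := Nat.one_le_cast.2 (Nat.one_le_iff_ne_zero.2 hk)
  have sqrt_pow : √3 ^ k = (3 : ℝ) ^ (k / 2 : ℝ) := by
    rw [Real.sqrt_eq_rpow, ← Real.rpow_mul_natCast zero_le_three, one_div_mul_eq_div]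
  rw [growthRate_pow_mul_five_fourths_pow, sqrt_pow, ← Real.rpow_mul_natCast zero_le_three,
    one_div_bhExponent]
  obtain rfl | rfl : r = 0 ∨ r = 1 := by omega
  · rw [pow_zero, one_mul]
    refine Real.rpow_lt_rpow_of_exponent_lt (by norm_num) ?_
    push_cast
    field_simp
    linarith
  · calc growthRate ^ 1 * 3 ^ (k / 2 : ℝ)
        < 3 ^ ((1 : ℝ) / 6) * 3 ^ (k / 2 : ℝ) := by
          rw [pow_one]
          gcongr
          exact growthRate_lt_rpow_one_sixth
      _ = 3 ^ (1 / 6 + k / 2 : ℝ) := (Real.rpow_add three_pos _ _).symm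
      _ ≤ 3 ^ (((2 * k + 1 : ℕ) + 1) / (2 * (2 * k + 1 : ℕ)) * k : ℝ) := by
          refine Real.rpow_le_rpow_of_exponent_le (by norm_num) ?_
          push_cast
          field_simp
          linarith

end GrowthRate

/-- For every integer `m > 1`,
`D_{ℝ,m} > (2·3^{1/4}/√5)^m > 1.17^m`. -/
theorem real_BH_lower_exponential (m : ℕ) (hm : 1 < m) :
    (2 * (3 : ℝ) ^ ((1 : ℝ) / 4) / Real.sqrt 5) ^ m < BHconst m ∧
    (1.17 : ℝ) ^ m < (2 * (3 : ℝ) ^ ((1 : ℝ) / 4) / Real.sqrt 5) ^ m := by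
  refine ⟨?_, pow_lt_pow_left₀ lt_growthRate (by norm_num) (by omega)⟩
  obtain ⟨k, r, hk, hr, rfl⟩ : ∃ k r, k ≠ 0 ∧ r ≤ 1 ∧ m = 2 * k + r :=
    ⟨m / 2, m % 2, by omega, by omega, by omega⟩
  obtain ⟨n, P, hP, lpNorm_eq, supNorm_P_le⟩ := exists_isHomogeneous_lpNorm_eq_supNorm_le k r
  refine lt_of_mul_lt_mul_right (a := (5 / 4 : ℝ) ^ k) ?_ (by positivity)
  calc growthRate ^ (2 * k + r) * (5 / 4) ^ k
      < (3 ^ (1 / bhExponent (2 * k + r))) ^ k :=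
        growthRate_pow_mul_lt hk hr
    _ = lpNorm (bhExponent (2 * k + r)) P := (lpNorm_eq _).symm
    _ ≤ BHconst (2 * k + r) * supNorm P := lpNorm_le_BHconst_mul_supNorm (by omega) hP
    _ ≤ BHconst (2 * k + r) * (5 / 4) ^ k :=
        mul_le_mul_of_nonneg_left supNorm_P_le (BHconst_nonneg _)
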